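/- arXiv:1408.2439 — 2 statements merged into one kernel-verified Lean document; each statement's English description precedes it below -/
import Mathlib

section
/- Let Δ be a root basis in a non-degenerate quadratic space (V,B) whose based root system (Δ,Φ) has level 1. Then (V,B) is a Lorentz space, any two distinct weights in Δ* are disjoint, and no weight in Δ* is space-like, i.e. B(ω,ω) ≤ 0 for all ω ∈ Δ*. -/
open scoped BigOperators

namespace BoydMaxwell

variable {V : Type*} [AddCommGroup V] [Module ℝ V]

/-- `(V, B)` is a Lorentz space: `B` is non-degenerate with exactly one negative
eigenvalue, i.e. there is a time-like vector but every subspace on which `B` is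
negative definite has dimension at most `1`. -/
def IsLorentz (B : LinearMap.BilinForm ℝ V) : Prop :=
  B.Nondegenerate ∧ (∃ v : V, B v v < 0) ∧
    ∀ W : Submodule ℝ V, (∀ v ∈ W, v ≠ 0 → B v v < 0) → Module.finrank ℝ W ≤ 1

/-- A root basis in the quadratic space `(V, B)`. -/
structure IsRootBasis (B : LinearMap.BilinForm ℝ V) (Δ : Finset V) : Prop where
  unit : ∀ α ∈ Δ, B α α = 1
  offdiag : ∀ α ∈ Δ, ∀ β ∈ Δ, α ≠ β →
    B α β ≤ -1 ∨ ∃ k : ℕ, 2 ≤ k ∧ B α β = -Real.cos (Real.pi / k)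
  posIndep : ∀ c : V → ℝ, (∀ α ∈ Δ, 0 ≤ c α) →
    (∑ α ∈ Δ, c α • α) = 0 → ∀ α ∈ Δ, c α = 0
  spans : Submodule.span ℝ (Δ : Set V) = ⊤

/-- The reflection `s_α : x ↦ x - 2 B(α,x) α`. -/
def reflection (B : LinearMap.BilinForm ℝ V) (α : V) : V →ₗ[ℝ] V :=
  LinearMap.id - (B α).smulRight ((2 : ℝ) • α)

/-- The Weyl group `W`: the subgroup of linear automorphisms generated by the
reflections in the simple roots. -/
def weylGroup (B : LinearMap.BilinForm ℝ V) (Δ : Finset V) : Subgroup (V ≃ₗ[ℝ] V) :=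
  Subgroup.closure { g : V ≃ₗ[ℝ] V | ∃ α ∈ Δ, (g : V →ₗ[ℝ] V) = reflection B α }

/-- The set of roots `Φ = W(Δ)`. -/
def roots (B : LinearMap.BilinForm ℝ V) (Δ : Finset V) : Set V :=
  { x | ∃ w ∈ weylGroup B Δ, ∃ α ∈ Δ, x = w α }

/-- The polyhedral cone of non-negative linear combinations of a finite set. -/
def cone (Δ : Finset V) : Set V :=
  { x | ∃ c : V → ℝ, (∀ α ∈ Δ, 0 ≤ c α) ∧ x = ∑ α ∈ Δ, c α • α }

/-- `F` is a face of the convex set `C`. -/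
def IsFace (C F : Set V) : Prop :=
  F ⊆ C ∧ Convex ℝ F ∧ ∀ x ∈ C, ∀ y ∈ C, ∀ t : ℝ, 0 < t → t < 1 →
    t • x + (1 - t) • y ∈ F → x ∈ F ∧ y ∈ F

/-- `I ⊆ Δ` is an `l`-facial subset: `Cone(I)` is a face of `Cone(Δ)` and
`Span(I)` has codimension `l` in `V`. -/
def IsFacial (Δ I : Finset V) (l : ℕ) : Prop :=
  I ⊆ Δ ∧ IsFace (cone Δ) (cone I) ∧
    Module.finrank ℝ (Submodule.span ℝ (I : Set V)) + l = Module.finrank ℝ V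

/-- `B` is positive semidefinite on the span of every `l`-facial subset. -/
def LevelLE (B : LinearMap.BilinForm ℝ V) (Δ : Finset V) (l : ℕ) : Prop :=
  ∀ I : Finset V, IsFacial Δ I l → ∀ x ∈ Submodule.span ℝ (I : Set V), 0 ≤ B x x

/-- The root system generated by `Δ` has level exactly `l`: `l` is the smallest
integer such that `B` is positive semidefinite on the span of every `l`-facial
subset of `Δ`. -/
def HasLevel (B : LinearMap.BilinForm ℝ V) (Δ : Finset V) (l : ℕ) : Prop :=
  LevelLE B Δ l ∧ ∀ m : ℕ, m < l → ¬ LevelLE B Δ m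

/-- `ω` is the weight associated to the `1`-facial subset `I`. -/
def IsWeight (B : LinearMap.BilinForm ℝ V) (Δ I : Finset V) (ω : V) : Prop :=
  IsFacial Δ I 1 ∧ (∀ α ∈ I, B α ω = 0) ∧
    (∀ α ∈ Δ, α ∉ I → 0 < B α ω) ∧
    (∀ α ∈ Δ, α ∉ I → 1 ≤ B α ω) ∧ (∃ α ∈ Δ, α ∉ I ∧ B α ω = 1)

/-- The set `Δ*` of weights. -/
def weights (B : LinearMap.BilinForm ℝ V) (Δ : Finset V) : Set V :=
  { ω | ∃ I : Finset V, IsWeight B Δ I ω }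

/-- The orbit `Ω = W(Δ*)`. -/
def Omega (B : LinearMap.BilinForm ℝ V) (Δ : Finset V) : Set V :=
  { x | ∃ w ∈ weylGroup B Δ, ∃ ω ∈ weights B Δ, x = w ω }

/-- Two vectors are disjoint: `B(x,y) ≤ 0` and `B` is not positive definite on
`Span{x,y}`. -/
def DisjointVec (B : LinearMap.BilinForm ℝ V) (x y : V) : Prop :=
  B x y ≤ 0 ∧ ¬ ∀ z ∈ Submodule.span ℝ ({x, y} : Set V), z ≠ 0 → 0 < B z z

/-- The fundamental chamber `C* = {x | B(x, α) ≥ 0 for all α ∈ Δ}`. -/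
def chamber (B : LinearMap.BilinForm ℝ V) (Δ : Finset V) : Set V :=
  { x | ∀ α ∈ Δ, 0 ≤ B x α }

/-- The Tits cone `T = ⋃_{w ∈ W} w(C*)`. -/
def titsCone (B : LinearMap.BilinForm ℝ V) (Δ : Finset V) : Set V :=
  { x | ∃ w ∈ weylGroup B Δ, ∃ y ∈ chamber B Δ, x = w y }

/-- The convex cone generated by an arbitrary set. -/
def coneOf (X : Set V) : Set V :=
  { x | ∃ (s : Finset V) (c : V → ℝ), (↑s ⊆ X) ∧ (∀ v ∈ s, 0 ≤ c v) ∧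
      x = ∑ v ∈ s, c v • v }

/-!
If `Δ` spans and is positively independent, then `Cone(Δ)` has a facet; level `1` makes `B` positive
semidefinite on the hyperplane spanned by that facet, so `B` has negative index at most one.
A weight `ω` is orthogonal to a hyperplane on which `B` is positive semidefinite, so if `ω` were
space-like, `B` would be positive semidefinite on all of `V`, which level `1` forbids. As roots
pairwise have non-positive product, taking absolute values of coefficients moves a time-like vector
to some `v ∈ Cone(Δ)`. All weights pair non-negatively with `v` and none is space-like, so they lie
in the same closed half of the light cone, where products are non-positive by the reverse
Cauchy–Schwarz inequality.
-/

/-! ### Symmetric forms of negative index at most one -/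

section NegativeIndex

variable {B : LinearMap.BilinForm ℝ V}

/-- The negative index of inertia of `B` is at most one, in the form used by `IsLorentz`: subspaces
on which `B` is negative definite are at most lines. -/
def NegIndexLEOne (B : LinearMap.BilinForm ℝ V) : Prop :=
  ∀ W : Submodule ℝ V, (∀ v ∈ W, v ≠ 0 → B v v < 0) → Module.finrank ℝ W ≤ 1

lemma negIndexLEOne_of_nonneg_on_ker {f : Module.Dual ℝ V} (hf : ∀ x, f x = 0 → 0 ≤ B x x) :
    NegIndexLEOne B := by
  intro W hW
  have hinj : Function.Injective (f ∘ₗ W.subtype) := by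
    refine (injective_iff_map_eq_zero _).2 fun w hw ↦ ?_
    by_contra hw0
    exact (hW w w.2 (by simpa using hw0)).not_ge (hf w hw)
  simpa using LinearMap.finrank_le_finrank_of_injective hinj

lemma NegIndexLEOne.apply_self_mul_apply_self_le_sq (hindex : NegIndexLEOne B) (hB : B.IsSymm)
    {v : V} (hv : B v v < 0) (x : V) : B v v * B x x ≤ B x v ^ 2 := by
  by_contra! hlt
  have hneg : ∀ a b : ℝ, ¬(a = 0 ∧ b = 0) → B (a • v + b • x) (a • v + b • x) < 0 := by
    intro a b hab
    have hsquare : B v v * B (a • v + b • x) (a • v + b • x) =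
        (a * B v v + b * B x v) ^ 2 + b ^ 2 * (B v v * B x x - B x v ^ 2) := by
      simp only [map_add, LinearMap.add_apply, map_smul, LinearMap.smul_apply, smul_eq_mul,
        hB.eq v x]
      ring
    refine neg_of_mul_pos_right (hsquare ▸ ?_) hv.le
    by_cases hb : b = 0
    · have ha : a ≠ 0 := fun ha ↦ hab ⟨ha, hb⟩
      simpa [hb] using sq_pos_of_ne_zero (mul_ne_zero ha hv.ne)
    · exact add_pos_of_nonneg_of_pos (sq_nonneg _) (mul_pos (by positivity) (sub_pos.2 hlt))
  have hli : LinearIndependent ℝ ![v, x] := by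
    refine LinearIndependent.pair_iff.2 fun a b h0 ↦ ?_
    by_contra hab
    simpa [h0] using hneg a b hab
  have hle : Module.finrank ℝ (Submodule.span ℝ (Set.range ![v, x])) ≤ 1 := by
    refine hindex _ fun y hy hy0 ↦ ?_
    rw [Matrix.range_cons_cons_empty, Submodule.mem_span_pair] at hy
    obtain ⟨a, b, rfl⟩ := hy
    exact hneg a b fun ⟨ha, hb⟩ ↦ hy0 (by simp [ha, hb])
  rw [finrank_span_eq_card hli, Fintype.card_fin] at hle
  omega

/-- The polarised Gram form `(x, y) ↦ B(x,v) B(y,v) - B(v,v) B(x,y)`. For `v` not light-like it is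
`-B(v,v)` times the pullback of `B` along the orthogonal projection to the complement of `v`, so it
transfers the Cauchy–Schwarz inequality from `v^⊥` to all of `V`. -/
def gramForm (B : LinearMap.BilinForm ℝ V) (v : V) : LinearMap.BilinForm ℝ V :=
  (B.flip v).smulRight (B.flip v) - B v v • B

lemma gramForm_apply (v x y : V) : gramForm B v x y = B x v * B y v - B v v * B x y := by
  simp [gramForm]

lemma isSymm_gramForm (hB : B.IsSymm) (v : V) : (gramForm B v).IsSymm :=
  ⟨fun x y ↦ by simp only [gramForm_apply, hB.eq x y, mul_comm (B x v)]⟩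

lemma NegIndexLEOne.gramForm_apply_self_nonneg (hindex : NegIndexLEOne B) (hB : B.IsSymm)
    {v : V} (hv : B v v < 0) (x : V) : 0 ≤ gramForm B v x x := by
  rw [gramForm_apply, ← pow_two]
  exact sub_nonneg.2 (hindex.apply_self_mul_apply_self_le_sq hB hv x)

lemma NegIndexLEOne.apply_nonpos_of_same_half_cone (hindex : NegIndexLEOne B) (hB : B.IsSymm)
    {v x y : V} (hv : B v v < 0) (hx : B x x ≤ 0) (hy : B y y ≤ 0)
    (hxv : 0 ≤ B x v) (hyv : 0 ≤ B y v) : B x y ≤ 0 := by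
  have hgram_le : ∀ z, B z z ≤ 0 → gramForm B v z z ≤ B z v * B z v := fun z hz ↦ by
    rw [gramForm_apply]
    exact sub_le_self _ (mul_nonneg_of_nonpos_of_nonpos hv.le hz)
  have hsq : gramForm B v x y ^ 2 ≤ (B x v * B y v) ^ 2 :=
    calc gramForm B v x y ^ 2 ≤ gramForm B v x x * gramForm B v y y :=
          (gramForm B v).apply_sq_le_of_symm (hindex.gramForm_apply_self_nonneg hB hv)
            (LinearMap.BilinForm.isSymm_iff.1 (isSymm_gramForm hB v)) x y
      _ ≤ (B x v * B x v) * (B y v * B y v) :=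
          mul_le_mul (hgram_le x hx) (hgram_le y hy)
            (hindex.gramForm_apply_self_nonneg hB hv y) (mul_self_nonneg _)
      _ = (B x v * B y v) ^ 2 := by ring
  have hle : gramForm B v x y ≤ B x v * B y v :=
    (abs_le_of_sq_le_sq' hsq (mul_nonneg hxv hyv)).2
  rw [gramForm_apply, sub_le_self_iff] at hle
  exact nonpos_of_mul_nonneg_right hle hv

lemma apply_self_nonneg_of_nonneg_on_orthogonal (hB : B.IsSymm) {w : V} (hw : 0 < B w w)
    (hperp : ∀ p, B p w = 0 → 0 ≤ B p p) (x : V) : 0 ≤ B x x := by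
  have hproj : 0 ≤ B w w * (B w w * B x x - B w x * B x w) := by
    rw [← LinearMap.BilinForm.apply_smul_sub_smul_sub_eq]
    exact hperp _ (by simp [hB.eq x w, mul_comm])
  rw [hB.eq w x, ← pow_two] at hproj
  have hdet : B x w ^ 2 ≤ B w w * B x x := sub_nonneg.1 (nonneg_of_mul_nonneg_right hproj hw)
  exact nonneg_of_mul_nonneg_right ((sq_nonneg _).trans hdet) hw

end NegativeIndex

/-! ### Facets of finitely generated cones -/

section Cone

variable {Δ : Finset V}

lemma mem_hull_iff_mem_cone {x : V} : x ∈ PointedCone.hull ℝ (Δ : Set V) ↔ x ∈ cone Δ := by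
  rw [Submodule.mem_span_finset]
  constructor
  · rintro ⟨c, -, rfl⟩
    exact ⟨fun α ↦ c α, fun α _ ↦ (c α).2, rfl⟩
  · rintro ⟨c, hc, rfl⟩
    exact Submodule.mem_span_finset.1 (Submodule.sum_mem _ fun α hα ↦
      PointedCone.smul_mem _ (hc α hα) (PointedCone.subset_hull hα))

lemma convex_cone (Δ : Finset V) : Convex ℝ (cone Δ) := by
  have hcoe : cone Δ = (PointedCone.hull ℝ (Δ : Set V) : Set V) :=
    Set.ext fun _ ↦ mem_hull_iff_mem_cone.symm
  exact hcoe ▸ (PointedCone.hull ℝ (Δ : Set V)).convex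

lemma apply_nonneg_of_mem_cone {f : Module.Dual ℝ V} (hf : ∀ α ∈ Δ, 0 ≤ f α) {x : V}
    (hx : x ∈ cone Δ) : 0 ≤ f x := by
  obtain ⟨c, hc, rfl⟩ := hx
  simpa only [map_sum, map_smul, smul_eq_mul] using
    Finset.sum_nonneg fun α hα ↦ mul_nonneg (hc α hα) (hf α hα)

lemma cone_filter_eq_zero {f : Module.Dual ℝ V} (hf : ∀ α ∈ Δ, 0 ≤ f α) :
    cone {α ∈ Δ | f α = 0} = {x ∈ cone Δ | f x = 0} := by
  ext x
  constructor
  · rintro ⟨c, hc, rfl⟩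
    refine ⟨⟨fun α ↦ if f α = 0 then c α else 0, fun α hα ↦ ?_, ?_⟩, ?_⟩
    · dsimp only
      split_ifs with h
      exacts [hc α (Finset.mem_filter.2 ⟨hα, h⟩), le_rfl]
    · simp only [ite_smul, zero_smul, Finset.sum_filter]
    · rw [map_sum]
      exact Finset.sum_eq_zero fun α hα ↦ by simp [(Finset.mem_filter.1 hα).2]
  · rintro ⟨⟨c, hc, rfl⟩, hx⟩
    refine ⟨c, fun α hα ↦ hc α (Finset.mem_of_mem_filter α hα), ?_⟩
    simp only [map_sum, map_smul, smul_eq_mul] at hx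
    rw [Finset.sum_eq_zero_iff_of_nonneg fun α hα ↦ mul_nonneg (hc α hα) (hf α hα)] at hx
    refine (Finset.sum_filter_of_ne fun α hα hne ↦ ?_).symm
    exact (mul_eq_zero.1 (hx α hα)).resolve_left fun h ↦ hne (by rw [h, zero_smul])

lemma isFace_inter_ker {C : Set V} (hC : Convex ℝ C) {f : Module.Dual ℝ V}
    (hf : ∀ x ∈ C, 0 ≤ f x) : IsFace C {x ∈ C | f x = 0} := by
  refine ⟨fun _ hx ↦ hx.1, hC.inter (LinearMap.ker f).convex, fun x hx y hy t ht ht1 hxy ↦ ?_⟩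
  have ht1' : 0 < 1 - t := sub_pos.2 ht1
  have hsum : t * f x + (1 - t) * f y = 0 := by
    simpa only [map_add, map_smul, smul_eq_mul] using hxy.2
  obtain ⟨hfx, hfy⟩ := (add_eq_zero_iff_of_nonneg (mul_nonneg ht.le (hf x hx))
    (mul_nonneg ht1'.le (hf y hy))).1 hsum
  exact ⟨⟨hx, (mul_eq_zero.1 hfx).resolve_left ht.ne'⟩,
    ⟨hy, (mul_eq_zero.1 hfy).resolve_left ht1'.ne'⟩⟩

lemma isFacial_one_of_span_eq_ker [FiniteDimensional ℝ V] {f : Module.Dual ℝ V} (hf0 : f ≠ 0)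
    (hf : ∀ α ∈ Δ, 0 ≤ f α)
    (hspan : Submodule.span ℝ (({α ∈ Δ | f α = 0} : Finset V) : Set V) = LinearMap.ker f) :
    IsFacial Δ {α ∈ Δ | f α = 0} 1 := by
  refine ⟨Finset.filter_subset _ _, ?_, ?_⟩
  · rw [cone_filter_eq_zero hf]
    exact isFace_inter_ker (convex_cone Δ) fun _ hx ↦ apply_nonneg_of_mem_cone hf hx
  · rw [hspan]
    exact Module.Dual.finrank_ker_add_one_of_ne_zero hf0

/-- Condition (3) of a root basis: only the trivial non-negative combination of `Δ` vanishes. -/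
def PosIndep (Δ : Finset V) : Prop :=
  ∀ c : V → ℝ, (∀ α ∈ Δ, 0 ≤ c α) → ∑ α ∈ Δ, c α • α = 0 → ∀ α ∈ Δ, c α = 0

lemma exists_smul_sum_add_mem_cone {y : V} (hy : y ∈ Submodule.span ℝ (Δ : Set V)) :
    ∃ t : ℝ, t • ∑ α ∈ Δ, α + y ∈ cone Δ := by
  obtain ⟨c, -, rfl⟩ := Submodule.mem_span_finset.1 hy
  refine ⟨∑ β ∈ Δ, |c β|, fun α ↦ (∑ β ∈ Δ, |c β|) + c α, fun α hα ↦ ?_, ?_⟩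
  · have hle : |c α| ≤ ∑ β ∈ Δ, |c β| :=
      Finset.single_le_sum (f := fun β ↦ |c β|) (fun _ _ ↦ abs_nonneg _) hα
    linarith [neg_abs_le (c α)]
  · simp only [add_smul, Finset.sum_add_distrib, Finset.smul_sum]

lemma PosIndep.nonneg_of_smul_sum_mem_cone (hindep : PosIndep Δ) (hne : Δ.Nonempty) {t : ℝ}
    (ht : t • ∑ α ∈ Δ, α ∈ cone Δ) : 0 ≤ t := by
  obtain ⟨c, hc, hsum⟩ := ht
  by_contra! hlt
  obtain ⟨α, hα⟩ := hne
  have hzero : c α - t = 0 := by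
    refine hindep (fun β ↦ c β - t) (fun β hβ ↦ by linarith [hc β hβ]) ?_ α hα
    rw [Finset.sum_congr rfl fun β _ ↦ sub_smul (c β) t β, Finset.sum_sub_distrib, ← hsum,
      Finset.smul_sum, sub_self]
  linarith [hc α hα]

-- The sum `u` of `Δ` is an order unit of the cone, so `t • u ↦ t` extends to a positive functional.
lemma PosIndep.exists_nonneg_dual [Nontrivial V] (hindep : PosIndep Δ)
    (hspan : Submodule.span ℝ (Δ : Set V) = ⊤) :
    ∃ f : Module.Dual ℝ V, f ≠ 0 ∧ ∀ α ∈ Δ, 0 ≤ f α := by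
  have hne : Δ.Nonempty := by
    rw [Finset.nonempty_iff_ne_empty]
    rintro rfl
    simp at hspan
  have hu : ∑ α ∈ Δ, α ≠ 0 := by
    intro hu
    obtain ⟨α, hα⟩ := hne
    exact one_ne_zero (hindep (fun _ ↦ 1) (fun _ _ ↦ zero_le_one) (by simpa using hu) α hα)
  let φ : V →ₗ.[ℝ] ℝ := LinearPMap.mkSpanSingleton (∑ α ∈ Δ, α) (1 : ℝ) hu
  have hnonneg : ∀ x : φ.domain, (x : V) ∈ PointedCone.hull ℝ (Δ : Set V) → 0 ≤ φ x := by
    rintro ⟨x, hx⟩ hxC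
    obtain ⟨t, rfl⟩ := Submodule.mem_span_singleton.1 hx
    rw [LinearPMap.mkSpanSingleton'_apply, smul_eq_mul, mul_one]
    exact hindep.nonneg_of_smul_sum_mem_cone hne (mem_hull_iff_mem_cone.1 hxC)
  have hdense : ∀ y, ∃ x : φ.domain, (x : V) + y ∈ PointedCone.hull ℝ (Δ : Set V) := by
    intro y
    obtain ⟨t, ht⟩ := exists_smul_sum_add_mem_cone (Δ := Δ) (y := y) (hspan ▸ Submodule.mem_top)
    exact ⟨⟨t • ∑ α ∈ Δ, α, Submodule.smul_mem _ t (Submodule.mem_span_singleton_self _)⟩,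
      mem_hull_iff_mem_cone.2 ht⟩
  obtain ⟨f, hfφ, hf⟩ := riesz_extension (PointedCone.hull ℝ (Δ : Set V)) φ hnonneg hdense
  refine ⟨f, ?_, fun α hα ↦ hf α (PointedCone.subset_hull hα)⟩
  rintro rfl
  exact zero_ne_one ((hfφ ⟨_, Submodule.mem_span_singleton_self _⟩).trans
    (LinearPMap.mkSpanSingleton_apply ℝ ℝ hu 1))

lemma exists_pos_add_mul_nonneg_of_neg {ι : Type*} {s : Finset ι} {f g : ι → ℝ}
    (hf : ∀ i ∈ s, 0 ≤ f i) (hfg : ∀ i ∈ s, g i < 0 → 0 < f i) (hg : ∃ i ∈ s, g i < 0) :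
    ∃ t > 0, (∀ i ∈ s, 0 ≤ f i + t * g i) ∧ ∃ i ∈ s, g i < 0 ∧ f i + t * g i = 0 := by
  obtain ⟨j, hj, hmin⟩ := Finset.exists_min_image {i ∈ s | g i < 0} (fun i ↦ f i / -g i)
    (hg.imp fun i hi ↦ Finset.mem_filter.2 hi)
  obtain ⟨hjs, hgj⟩ := Finset.mem_filter.1 hj
  have ht : 0 < f j / -g j := div_pos (hfg j hjs hgj) (neg_pos.2 hgj)
  refine ⟨f j / -g j, ht, fun i hi ↦ ?_, j, hjs, hgj, by field_simp [hgj.ne]; ring⟩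
  rcases lt_or_ge (g i) 0 with hgi | hgi
  · have hle := hmin i (Finset.mem_filter.2 ⟨hi, hgi⟩)
    rw [le_div_iff₀ (neg_pos.2 hgi)] at hle
    linarith
  · exact add_nonneg (hf i hi) (mul_nonneg ht.le hgi)

lemma exists_dual_neg_of_notMem (hspan : Submodule.span ℝ (Δ : Set V) = ⊤)
    {U : Submodule ℝ V} {x : V} (hx : x ∉ U) :
    ∃ g : Module.Dual ℝ V, g x ≠ 0 ∧ U ≤ LinearMap.ker g ∧ ∃ α ∈ Δ, g α < 0 := by
  obtain ⟨g, hgx, hgU⟩ := Submodule.exists_le_ker_of_notMem hx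
  by_cases hneg : ∃ α ∈ Δ, g α < 0
  · exact ⟨g, hgx, hgU, hneg⟩
  · push Not at hneg
    refine ⟨-g, by simpa using hgx, fun u hu ↦ by simpa using hgU hu, ?_⟩
    by_contra! hpos
    have hg : g = 0 := LinearMap.ext_on hspan fun α hα ↦
      le_antisymm (by simpa using hpos α hα) (hneg α hα)
    simp [hg] at hgx

-- Tilt `f` by a functional vanishing on its zeros until another generator becomes a zero.
lemma exists_nonneg_dual_filter_ssubset (hspan : Submodule.span ℝ (Δ : Set V) = ⊤)
    {f : Module.Dual ℝ V} (hf : ∀ α ∈ Δ, 0 ≤ f α) {x : V} (hfx : f x = 0)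
    (hx : x ∉ Submodule.span ℝ (({α ∈ Δ | f α = 0} : Finset V) : Set V)) :
    ∃ h : Module.Dual ℝ V, (h ≠ 0 ∧ ∀ α ∈ Δ, 0 ≤ h α) ∧
      ({α ∈ Δ | f α = 0} : Finset V) ⊂ {α ∈ Δ | h α = 0} := by
  obtain ⟨g, hgx, hgker, hneg⟩ := exists_dual_neg_of_notMem hspan hx
  have hgzero : ∀ α ∈ Δ, f α = 0 → g α = 0 := fun α hα hfα ↦
    hgker (Submodule.subset_span (Finset.mem_filter.2 ⟨hα, hfα⟩))
  have hfpos : ∀ α ∈ Δ, g α < 0 → 0 < f α := fun α hα hgα ↦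
    (hf α hα).lt_of_ne' fun hfα ↦ hgα.ne (hgzero α hα hfα)
  obtain ⟨t, ht, hnonneg, β, hβ, hgβ, hzero⟩ := exists_pos_add_mul_nonneg_of_neg hf hfpos hneg
  refine ⟨f + t • g, ⟨fun h0 ↦ ?_, by simpa using hnonneg⟩, ?_⟩
  · have hhx : f x + t * g x = 0 := by simpa using LinearMap.congr_fun h0 x
    rw [hfx, zero_add] at hhx
    exact mul_ne_zero ht.ne' hgx hhx
  · refine Finset.ssubset_iff_of_subset (fun α hα ↦ ?_) |>.2 ⟨β, ?_, ?_⟩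
    · obtain ⟨hαΔ, hfα⟩ := Finset.mem_filter.1 hα
      simp [hαΔ, hfα, hgzero α hαΔ hfα]
    · simpa [hβ] using hzero
    · simpa [hβ] using (hfpos β hβ hgβ).ne'

lemma PosIndep.exists_facet_dual [Nontrivial V] (hindep : PosIndep Δ)
    (hspan : Submodule.span ℝ (Δ : Set V) = ⊤) :
    ∃ f : Module.Dual ℝ V, f ≠ 0 ∧ (∀ α ∈ Δ, 0 ≤ f α) ∧
      Submodule.span ℝ (({α ∈ Δ | f α = 0} : Finset V) : Set V) = LinearMap.ker f := by
  obtain ⟨f, ⟨hf0, hf⟩, hmax⟩ := Set.Finite.exists_maximalFor'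
    (fun f : Module.Dual ℝ V ↦ ({α ∈ Δ | f α = 0} : Finset V)) {f | f ≠ 0 ∧ ∀ α ∈ Δ, 0 ≤ f α}
    (Δ.powerset.finite_toSet.subset <| by
      rintro _ ⟨f, -, rfl⟩
      exact Finset.mem_powerset.2 (Finset.filter_subset _ _))
    (hindep.exists_nonneg_dual hspan)
  refine ⟨f, hf0, hf, le_antisymm ?_ fun x hfx ↦ ?_⟩
  · exact Submodule.span_le.2 fun α hα ↦ (Finset.mem_filter.1 hα).2
  · by_contra hx
    obtain ⟨h, hh, hlt⟩ := exists_nonneg_dual_filter_ssubset hspan hf hfx hx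
    exact hlt.not_ge (hmax hh hlt.le)

end Cone

/-! ### Levels and weights -/

section Level

variable {B : LinearMap.BilinForm ℝ V} {Δ : Finset V}

lemma exists_apply_self_neg_of_not_levelLE {l : ℕ} (h : ¬LevelLE B Δ l) : ∃ x, B x x < 0 := by
  simp only [LevelLE, not_forall, not_le] at h
  obtain ⟨-, -, x, -, hx⟩ := h
  exact ⟨x, hx⟩

lemma LevelLE.negIndexLEOne (hlevel : LevelLE B Δ 1) (hindep : PosIndep Δ)
    (hspan : Submodule.span ℝ (Δ : Set V) = ⊤) : NegIndexLEOne B := by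
  have : FiniteDimensional ℝ V := Module.finite_def.2 ⟨Δ, hspan⟩
  rcases subsingleton_or_nontrivial V with _ | _
  · exact fun W _ ↦ by simp [Module.finrank_zero_of_subsingleton]
  · obtain ⟨f, hf0, hf, hker⟩ := hindep.exists_facet_dual hspan
    exact negIndexLEOne_of_nonneg_on_ker fun x hx ↦
      hlevel _ (isFacial_one_of_span_eq_ker hf0 hf hker) x (hker ▸ hx)

lemma apply_self_sum_abs_smul_le (hobtuse : (Δ : Set V).Pairwise fun α β ↦ B α β ≤ 0)
    (c : V → ℝ) :
    B (∑ α ∈ Δ, |c α| • α) (∑ α ∈ Δ, |c α| • α) ≤ B (∑ α ∈ Δ, c α • α) (∑ α ∈ Δ, c α • α) := by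
  simp only [map_sum, LinearMap.sum_apply, map_smul, LinearMap.smul_apply, smul_eq_mul,
    Finset.mul_sum, ← mul_assoc]
  refine Finset.sum_le_sum fun α hα ↦ Finset.sum_le_sum fun β hβ ↦ ?_
  rcases eq_or_ne β α with rfl | hne
  · rw [abs_mul_abs_self]
  · rw [← abs_mul]
    exact mul_le_mul_of_nonpos_right (le_abs_self _) (hobtuse hβ hα hne)

lemma exists_mem_cone_apply_self_neg (hspan : Submodule.span ℝ (Δ : Set V) = ⊤)
    (hobtuse : (Δ : Set V).Pairwise fun α β ↦ B α β ≤ 0) (hneg : ∃ x, B x x < 0) :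
    ∃ v ∈ cone Δ, B v v < 0 := by
  obtain ⟨x, hx⟩ := hneg
  have hxspan : x ∈ Submodule.span ℝ (Δ : Set V) := hspan ▸ Submodule.mem_top
  obtain ⟨c, -, rfl⟩ := Submodule.mem_span_finset.1 hxspan
  exact ⟨∑ α ∈ Δ, |c α| • α, ⟨fun α ↦ |c α|, fun _ _ ↦ abs_nonneg _, rfl⟩,
    (apply_self_sum_abs_smul_le hobtuse c).trans_lt hx⟩

lemma weights_subset_chamber (hB : B.IsSymm) : weights B Δ ⊆ chamber B Δ := by
  rintro ω ⟨I, -, hzero, hpos, -⟩ α hα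
  rw [hB.eq]
  by_cases hαI : α ∈ I
  exacts [(hzero α hαI).ge, (hpos α hα hαI).le]

lemma ne_zero_of_mem_weights {ω : V} (hω : ω ∈ weights B Δ) : ω ≠ 0 := by
  rintro rfl
  obtain ⟨I, -, -, -, -, α, -, -, hone⟩ := hω
  simp at hone

lemma IsWeight.span_eq_ker_flip {I : Finset V} {ω : V} (hω : IsWeight B Δ I ω) :
    Submodule.span ℝ (I : Set V) = LinearMap.ker (B.flip ω) := by
  obtain ⟨⟨-, -, hcodim⟩, hzero, -, -, α, -, -, hone⟩ := hω
  have : FiniteDimensional ℝ V := FiniteDimensional.of_finrank_pos (by omega)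
  have hne : (B.flip ω : Module.Dual ℝ V) ≠ 0 := fun h ↦ by
    simpa [hone] using LinearMap.congr_fun h α
  refine Submodule.eq_of_le_of_finrank_eq (Submodule.span_le.2 hzero) ?_
  have hker := Module.Dual.finrank_ker_add_one_of_ne_zero hne
  omega

lemma LevelLE.apply_self_nonpos_of_mem_weights (hlevel : LevelLE B Δ 1) (hB : B.IsSymm)
    (hneg : ∃ x, B x x < 0) {ω : V} (hω : ω ∈ weights B Δ) : B ω ω ≤ 0 := by
  obtain ⟨I, hI⟩ := hω
  obtain ⟨x, hx⟩ := hneg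
  by_contra! hpos
  refine (apply_self_nonneg_of_nonneg_on_orthogonal hB hpos (fun p hp ↦ ?_) x).not_gt hx
  exact hlevel I hI.1 p (hI.span_eq_ker_flip ▸ hp)

lemma disjointVec_of_apply_self_nonpos {x y : V} (hx0 : x ≠ 0) (hx : B x x ≤ 0)
    (hxy : B x y ≤ 0) : DisjointVec B x y :=
  ⟨hxy, fun hpos ↦ (hpos x (Submodule.subset_span (Set.mem_insert x {y})) hx0).not_ge hx⟩

lemma IsRootBasis.pairwise_apply_nonpos (hΔ : IsRootBasis B Δ) :
    (Δ : Set V).Pairwise fun α β ↦ B α β ≤ 0 := by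
  intro α hα β hβ hne
  rcases hΔ.offdiag α hα β hβ hne with hle | ⟨k, hk, hcos⟩
  · linarith
  · have hangle : Real.pi / k ≤ Real.pi / 2 :=
      div_le_div_of_nonneg_left Real.pi_pos.le two_pos (by exact_mod_cast hk)
    have hangle' : 0 ≤ Real.pi / k := by positivity
    rw [hcos, neg_nonpos]
    exact Real.cos_nonneg_of_neg_pi_div_two_le_of_le (by linarith [Real.pi_pos]) hangle

end Level

theorem level_one_weights_general {B : LinearMap.BilinForm ℝ V} (hB : B.IsSymm) {Δ : Finset V}
    (hspan : Submodule.span ℝ (Δ : Set V) = ⊤) (hindep : PosIndep Δ)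
    (hobtuse : (Δ : Set V).Pairwise fun α β ↦ B α β ≤ 0) (h1 : HasLevel B Δ 1) :
    ((∃ v, B v v < 0) ∧ NegIndexLEOne B) ∧
      (∀ ω ∈ weights B Δ, ∀ ω' ∈ weights B Δ, DisjointVec B ω ω') ∧
      (∀ ω ∈ weights B Δ, B ω ω ≤ 0) := by
  obtain ⟨hlevel, hminimal⟩ := h1
  have hneg : ∃ x, B x x < 0 := exists_apply_self_neg_of_not_levelLE (hminimal 0 one_pos)
  have hindex : NegIndexLEOne B := hlevel.negIndexLEOne hindep hspan
  have hcausal : ∀ ω ∈ weights B Δ, B ω ω ≤ 0 := fun ω hω ↦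
    hlevel.apply_self_nonpos_of_mem_weights hB hneg hω
  obtain ⟨v, hvcone, hv⟩ := exists_mem_cone_apply_self_neg hspan hobtuse hneg
  have hhalf : ∀ ω ∈ weights B Δ, 0 ≤ B ω v := fun ω hω ↦
    apply_nonneg_of_mem_cone (weights_subset_chamber hB hω) hvcone
  refine ⟨⟨hneg, hindex⟩, fun ω hω ω' hω' ↦ ?_, hcausal⟩
  exact disjointVec_of_apply_self_nonpos (ne_zero_of_mem_weights hω) (hcausal ω hω) <|
    hindex.apply_nonpos_of_same_half_cone hB hv (hcausal ω hω) (hcausal ω' hω')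
      (hhalf ω hω) (hhalf ω' hω')

/-- extending Maxwell, Proposition 1.4. If a based root system
in a non-degenerate quadratic space has level `1`, then the space is Lorentzian,
any two distinct weights are disjoint, and no weight is space-like. -/
theorem level_one_weights
    {V : Type*} [AddCommGroup V] [Module ℝ V] [FiniteDimensional ℝ V]
    (B : LinearMap.BilinForm ℝ V) (hsymm : ∀ x y : V, B x y = B y x)
    (hnd : B.Nondegenerate)
    (Δ : Finset V) (hΔ : IsRootBasis B Δ) (h1 : HasLevel B Δ 1) :
    IsLorentz B ∧
      (∀ ω ∈ weights B Δ, ∀ ω' ∈ weights B Δ, ω ≠ ω' → DisjointVec B ω ω') ∧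
      (∀ ω ∈ weights B Δ, B ω ω ≤ 0) := by
  obtain ⟨⟨hneg, hindex⟩, hdisjoint, hcausal⟩ :=
    level_one_weights_general ⟨hsymm⟩ hΔ.spans hΔ.posIndep hΔ.pairwise_apply_nonpos h1
  exact ⟨⟨hnd, hneg, hindex⟩, fun ω hω ω' hω' _ ↦ hdisjoint ω hω ω' hω', hcausal⟩

end BoydMaxwell
end

section
/- Let Δ be a root basis in a non-degenerate quadratic space (V,B), with Weyl group W and Tits cone T. Then every vector x ∈ V satisfying B(x,y) ≥ 0 for all y ∈ T (i.e. every vector in the dual cone of the Tits cone) satisfies B(x,x) ≤ 0. -/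
open scoped BigOperators

namespace BoydMaxwell

variable {V : Type*} [AddCommGroup V] [Module ℝ V]

/-!
Let `ρ` be strictly positive on `Δ`; one exists by separating `0` from the convex hull of `Δ` in
the weak topology defined by `B`, whose continuous functionals are exactly the `B(·, y)`. For `x` in
the dual of the Tits cone, `B(w x, ρ) ≥ 0` for all `w ∈ W`, so this function of `w` is almost
minimised at some `z = w x`. Comparing `z` with its simple reflections shows that `B(z, α)` can
exceed `0` only slightly, so `ε ρ - z` lies in the chamber for a small `ε > 0`. Pairing it with
`z`, which is again in the dual cone, gives `B(x, x) = B(z, z) ≤ ε B(z, ρ)`; now let `ε → 0`.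
-/

open Filter Topology

section Separation

variable {E F : Type*} [AddCommGroup E] [Module ℝ E] [AddCommGroup F] [Module ℝ F]

lemma zero_notMem_convexHull_of_posIndep {s : Finset E}
    (hs : ∀ c : E → ℝ, (∀ v ∈ s, 0 ≤ c v) → ∑ v ∈ s, c v • v = 0 → ∀ v ∈ s, c v = 0) :
    (0 : E) ∉ convexHull ℝ (s : Set E) := by
  intro hzero
  obtain ⟨c, hc_nonneg, hc_sum, hc_comb⟩ := Finset.mem_convexHull'.1 hzero
  rw [Finset.sum_eq_zero (hs c hc_nonneg hc_comb)] at hc_sum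
  exact zero_ne_one hc_sum

lemma exists_strongDual_forall_pos_of_zero_notMem_convexHull [TopologicalSpace E]
    [IsTopologicalAddGroup E] [ContinuousSMul ℝ E] [LocallyConvexSpace ℝ E] [T2Space E]
    {s : Set E} (hs : s.Finite) (hzero : (0 : E) ∉ convexHull ℝ s) :
    ∃ f : StrongDual ℝ E, ∀ v ∈ s, 0 < f v := by
  obtain ⟨f, u, hu_pos, hu_lt⟩ := geometric_hahn_banach_point_closed
    (convex_convexHull ℝ s) (hs.isClosed_convexHull ℝ) hzero
  rw [map_zero] at hu_pos
  exact ⟨f, fun v hv => hu_pos.trans (hu_lt v (subset_convexHull ℝ s hv))⟩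

lemma exists_forall_pos_of_zero_notMem_convexHull {p : E →ₗ[ℝ] F →ₗ[ℝ] ℝ}
    (hp : p.SeparatingLeft) {s : Set E} (hs : s.Finite) (hzero : (0 : E) ∉ convexHull ℝ s) :
    ∃ y : F, ∀ v ∈ s, 0 < p v y := by
  have hp_inj : Function.Injective p :=
    LinearMap.ker_eq_bot.1 (LinearMap.separatingLeft_iff_ker_eq_bot.1 hp)
  have : T2Space (WeakBilin p) := (WeakBilin.isEmbedding hp_inj).t2Space
  obtain ⟨f, hf⟩ : ∃ f : StrongDual ℝ (WeakBilin p), ∀ v ∈ s, 0 < f v :=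
    exists_strongDual_forall_pos_of_zero_notMem_convexHull hs hzero
  obtain ⟨y, rfl⟩ := LinearMap.dualEmbedding_surjective p f
  exact ⟨y, hf⟩

end Separation

section WeylGroup

variable {B : LinearMap.BilinForm ℝ V} {Δ : Finset V}

lemma reflection_apply (B : LinearMap.BilinForm ℝ V) (α x : V) :
    reflection B α x = x - (2 * B α x) • α := by
  simp only [reflection, LinearMap.sub_apply, LinearMap.id_apply, LinearMap.smulRight_apply]
  module

lemma reflection_involutive {α : V} (hα : B α α = 1) :
    Function.Involutive (reflection B α) := by
  intro x
  simp only [reflection_apply, map_sub, map_smul, hα]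
  module

lemma apply_reflection_reflection (hsymm : ∀ x y : V, B x y = B y x) {α : V} (hα : B α α = 1)
    (x y : V) : B (reflection B α x) (reflection B α y) = B x y := by
  simp only [reflection_apply, map_sub, map_smul, LinearMap.sub_apply, LinearMap.smul_apply,
    smul_eq_mul, hα, hsymm x α]
  ring

lemma exists_mem_weylGroup_eq_reflection {α : V} (hα : α ∈ Δ) (hunit : B α α = 1) :
    ∃ w ∈ weylGroup B Δ, ∀ x, w x = reflection B α x :=
  ⟨LinearEquiv.ofInvolutive (reflection B α) (reflection_involutive hunit),
    Subgroup.subset_closure ⟨α, hα, rfl⟩, fun _ => rfl⟩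

lemma apply_weylGroup_weylGroup (hsymm : ∀ x y : V, B x y = B y x)
    (hunit : ∀ α ∈ Δ, B α α = 1) {w : V ≃ₗ[ℝ] V} (hw : w ∈ weylGroup B Δ) (x y : V) :
    B (w x) (w y) = B x y := by
  induction hw using Subgroup.closure_induction generalizing x y with
  | mem g hg =>
    obtain ⟨α, hα, hg⟩ := hg
    have hg_apply (v : V) : g v = reflection B α v := LinearMap.congr_fun hg v
    rw [hg_apply, hg_apply, apply_reflection_reflection hsymm (hunit α hα)]
  | one => rfl
  | mul a b _ _ ha hb => exact (ha _ _).trans (hb x y)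
  | inv a _ ha =>
    have hcancel (v : V) : a (a⁻¹ v) = v := a.apply_symm_apply v
    rw [← ha, hcancel, hcancel]

end WeylGroup

section DualTitsCone

variable {B : LinearMap.BilinForm ℝ V} {Δ : Finset V} {ρ : V}

lemma nonneg_apply_weylGroup_of_mem_dual_titsCone (hsymm : ∀ x y : V, B x y = B y x)
    (hunit : ∀ α ∈ Δ, B α α = 1) {x : V} (hx : ∀ y ∈ titsCone B Δ, 0 ≤ B x y)
    {w : V ≃ₗ[ℝ] V} (hw : w ∈ weylGroup B Δ) {y : V} (hy : y ∈ chamber B Δ) :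
    0 ≤ B (w x) y := by
  have hcancel : w (w⁻¹ y) = y := w.apply_symm_apply y
  rw [← hcancel, apply_weylGroup_weylGroup hsymm hunit hw]
  exact hx _ ⟨w⁻¹, inv_mem hw, y, hy, rfl⟩

lemma two_mul_apply_mul_apply_le_of_le_apply_reflection_add
    (hsymm : ∀ x y : V, B x y = B y x) {α z : V} {δ : ℝ}
    (hz : B z ρ ≤ B (reflection B α z) ρ + δ) : 2 * (B z α * B ρ α) ≤ δ := by
  simp only [reflection_apply, map_sub, map_smul, LinearMap.sub_apply, LinearMap.smul_apply,
    smul_eq_mul, hsymm α] at hz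
  linarith

/-- The last inequalities say that `ε • ρ - w x` lies in the chamber. -/
lemma exists_weylGroup_forall_apply_le (hsymm : ∀ x y : V, B x y = B y x)
    (hunit : ∀ α ∈ Δ, B α α = 1) (hρ : ∀ α ∈ Δ, 0 < B ρ α) {x : V}
    (hbdd : BddBelow (Set.range fun w : weylGroup B Δ => B (w.1 x) ρ)) :
    ∃ M : ℝ, ∀ ε > 0, ∃ w ∈ weylGroup B Δ,
      B (w x) ρ ≤ M ∧ ∀ α ∈ Δ, B (w x) α ≤ ε * B ρ α := by
  set m := ⨅ w : weylGroup B Δ, B (w.1 x) ρ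
  refine ⟨m + 1, fun ε hε => ?_⟩
  obtain ⟨δ, hδ_pos, hδ_le_one, hδ_le⟩ :
      ∃ δ > 0, δ ≤ 1 ∧ ∀ α ∈ Δ, δ ≤ 2 * (ε * B ρ α * B ρ α) := by
    have hsmall {r : ℝ} (hr : 0 < r) : ∀ᶠ δ in 𝓝[>] 0, δ ≤ r :=
      nhdsWithin_le_nhds (eventually_le_nhds hr)
    exact (eventually_mem_nhdsWithin.and <| (hsmall one_pos).and <| Δ.eventually_all.2 fun α hα =>
      hsmall (by have := hρ α hα; positivity)).exists
  obtain ⟨⟨w, hw⟩, hw_lt⟩ := exists_lt_of_ciInf_lt (lt_add_of_pos_right m hδ_pos)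
  refine ⟨w, hw, by linarith, fun α hα => ?_⟩
  obtain ⟨s, hs, hs_apply⟩ := exists_mem_weylGroup_eq_reflection hα (hunit α hα)
  have hm_le : m ≤ B (reflection B α (w x)) ρ := by
    simpa only [hs_apply, LinearEquiv.mul_apply] using ciInf_le hbdd ⟨s * w, mul_mem hs hw⟩
  have hmul_le : 2 * (B (w x) α * B ρ α) ≤ δ :=
    two_mul_apply_mul_apply_le_of_le_apply_reflection_add hsymm (by linarith)
  exact le_of_mul_le_mul_right (by linarith [hδ_le α hα]) (hρ α hα)

lemma apply_self_le_of_forall_apply_le {z : V} (hz : ∀ y ∈ chamber B Δ, 0 ≤ B z y) {ε : ℝ}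
    (hε : ∀ α ∈ Δ, B z α ≤ ε * B ρ α) : B z z ≤ ε * B z ρ := by
  have hmem : ε • ρ - z ∈ chamber B Δ := fun α hα => by
    simpa using hε α hα
  simpa using hz _ hmem

theorem dual_titsCone_nonpos_general (hsymm : ∀ x y : V, B x y = B y x)
    (hunit : ∀ α ∈ Δ, B α α = 1) (hρ : ∀ α ∈ Δ, 0 < B ρ α) {x : V}
    (hx : ∀ y ∈ titsCone B Δ, 0 ≤ B x y) : B x x ≤ 0 := by
  have hnonneg {w : V ≃ₗ[ℝ] V} (hw : w ∈ weylGroup B Δ) {y : V} (hy : y ∈ chamber B Δ) :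
      0 ≤ B (w x) y := nonneg_apply_weylGroup_of_mem_dual_titsCone hsymm hunit hx hw hy
  have hbdd : BddBelow (Set.range fun w : weylGroup B Δ => B (w.1 x) ρ) :=
    ⟨0, Set.forall_mem_range.2 fun w => hnonneg w.2 fun α hα => (hρ α hα).le⟩
  obtain ⟨M, hM⟩ := exists_weylGroup_forall_apply_le hsymm hunit hρ hbdd
  have hle_mul : ∀ ε > 0, B x x ≤ ε * M := fun ε hε => by
    obtain ⟨w, hw, hwM, hwε⟩ := hM ε hε
    calc
      B x x = B (w x) (w x) := (apply_weylGroup_weylGroup hsymm hunit hw x x).symm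
      _ ≤ ε * B (w x) ρ := apply_self_le_of_forall_apply_le (fun _ hy => hnonneg hw hy) hwε
      _ ≤ ε * M := by gcongr
  have hlim : Tendsto (fun ε : ℝ => ε * M) (𝓝[>] 0) (𝓝 0) :=
    tendsto_nhdsWithin_of_tendsto_nhds <| by simpa using (continuous_mul_const M).tendsto 0
  exact ge_of_tendsto hlim (eventually_nhdsWithin_of_forall hle_mul)

end DualTitsCone

/-- extending Maxwell, Proposition 1.2; Howlett–Rowley–Taylor,
Proposition 3.4. Every vector in the dual cone of the Tits cone satisfies
`B(x,x) ≤ 0`. -/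
theorem dual_titsCone_nonpos
    {V : Type*} [AddCommGroup V] [Module ℝ V] [FiniteDimensional ℝ V]
    (B : LinearMap.BilinForm ℝ V) (hsymm : ∀ x y : V, B x y = B y x)
    (hnd : B.Nondegenerate)
    (Δ : Finset V) (hΔ : IsRootBasis B Δ) :
    ∀ x : V, (∀ y ∈ titsCone B Δ, 0 ≤ B x y) → B x x ≤ 0 := by
  intro x hx
  obtain ⟨ρ, hρ⟩ := exists_forall_pos_of_zero_notMem_convexHull hnd.1 Δ.finite_toSet
    (zero_notMem_convexHull_of_posIndep hΔ.posIndep)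
  exact dual_titsCone_nonpos_general hsymm hΔ.unit (fun α hα => hsymm ρ α ▸ hρ α hα) hx

end BoydMaxwell
end
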